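/- arXiv:2506.22145 — 3 statements merged into one kernel-verified Lean document; each statement's English description precedes it below -/
import Mathlib

section
/- Let T be a Cayley tree labelled with [n]_0. For every non-root vertex i ∈ {1,…,n}, the number of children of i in T equals the number of positions j ∈ {1,…,n−1} with blob(T)(j) = i. The number of children of the root 0 equals the number of positions j ∈ {1,…,n−1} with blob(T)(j) = 0, plus one. -/
/-!
Let `r₁` be the smallest record. Send a position `j ∈ {1,…,n-1}` to itself when `j` is not a
record, and to the next record when it is; then `blob j` is the parent of the image of `j`
(`blob_eq`). This shift is a bijection from `{1,…,n-1}` onto `{1,…,n} \ {r₁}` (`image_shift`):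
it is defined everywhere because `n` is a record, it is injective and avoids `r₁`, and both sets
have `n - 1` elements. So the code lists the parents of all non-root vertices other than `r₁`,
and the parent of `r₁` is the root (`parent_least_record`), since the child of the root below
which `r₁` lies is itself a record.
-/

open scoped Classical

namespace WearyParking

/-- `f` is the parent function of a Cayley tree on `{0,…,n}` rooted at `0`:
`f 0 = 0`, `f` is pinned to `0` outside `{1,…,n}`, `f` maps `{1,…,n}` into `{0,…,n}`,
and every vertex reaches the root under iteration. -/
def IsCayleyTree (n : ℕ) (f : ℕ → ℕ) : Prop :=
  f 0 = 0 ∧ (∀ i, n < i → f i = 0) ∧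
  (∀ i, 1 ≤ i → i ≤ n → f i ≤ n) ∧
  (∀ i, 1 ≤ i → i ≤ n → ∃ k, f^[k] i = 0)

/-- A non-root vertex `i` is a record of the tree if it is greater than
all of its ancestors. -/
def IsRecord (n : ℕ) (f : ℕ → ℕ) (i : ℕ) : Prop :=
  1 ≤ i ∧ i ≤ n ∧ ∀ k, 1 ≤ k → f^[k] i < i

/-- The smallest record larger than `i`. -/
noncomputable def nextRecord (n : ℕ) (f : ℕ → ℕ) (i : ℕ) : ℕ :=
  sInf {j | IsRecord n f j ∧ i < j}

/-- The record (blob) code of the tree, a function on `{1,…,n-1}`: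
at a non-record position it records the parent, and at a record position it
records the parent of the next record. -/
noncomputable def blob (n : ℕ) (f : ℕ → ℕ) (i : ℕ) : ℕ :=
  if IsRecord n f i then f (nextRecord n f i) else f i

/-- Number of children of vertex `v` in the tree. -/
def numChildren (n : ℕ) (f : ℕ → ℕ) (v : ℕ) : ℕ :=
  ((Finset.Icc 1 n).filter fun i => f i = v).card

/-- The list of the first `i+1` vertices visited by the priority-first search:
start at the root `0`; at each step visit the smallest unvisited vertex whose
parent has been visited. -/
noncomputable def wearyList (n : ℕ) (f : ℕ → ℕ) : ℕ → List ℕ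
  | 0 => [0]
  | (i + 1) =>
      wearyList n f i ++
        [sInf {v | 1 ≤ v ∧ v ≤ n ∧ v ∉ wearyList n f i ∧ f v ∈ wearyList n f i}]

/-- The weary permutation of the tree: `weary n f i` is the `i`-th vertex visited
by the priority-first search (with `weary n f 0 = 0`). -/
noncomputable def weary (n : ℕ) (f : ℕ → ℕ) (i : ℕ) : ℕ :=
  (wearyList n f n).getD i 0

/-- The inverse of the weary permutation. -/
noncomputable def wearyInv (n : ℕ) (f : ℕ → ℕ) (v : ℕ) : ℕ :=
  sInf {i | weary n f i = v}

/-- The preference sequence `π_T` of the tree: `π_T i = ω_T⁻¹ (f_T i) + 1`. -/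
noncomputable def pref (n : ℕ) (f : ℕ → ℕ) (i : ℕ) : ℕ :=
  wearyInv n f (f i) + 1

/-- Parent function of the priority tree `pt(T)`: `ω_T⁻¹ ∘ f_T ∘ ω_T`. -/
noncomputable def prioParent (n : ℕ) (f : ℕ → ℕ) (i : ℕ) : ℕ :=
  wearyInv n f (f (weary n f i))

/-- The list of spots occupied by cars `1,…,c` in the classical parking process:
car `c` parks at the first spot `≥ π c` not occupied by an earlier car. -/
noncomputable def spotList (π : ℕ → ℕ) : ℕ → List ℕ
  | 0 => []
  | (c + 1) => spotList π c ++ [sInf {s | π (c + 1) ≤ s ∧ s ∉ spotList π c}]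

/-- The spot where car `c` ends up in the classical parking process. -/
noncomputable def spot (π : ℕ → ℕ) (c : ℕ) : ℕ :=
  (spotList π c).getD (c - 1) 0

/-- `π` is a parking function of length `n`: preferences lie in `{1,…,n}`
(pinned to `1` outside `{1,…,n}`) and every car parks within the `n` spots. -/
def IsParkingFun (n : ℕ) (π : ℕ → ℕ) : Prop :=
  (∀ c, 1 ≤ c → c ≤ n → 1 ≤ π c ∧ π c ≤ n) ∧
  (∀ c, c = 0 ∨ n < c → π c = 1) ∧
  (∀ c, 1 ≤ c → c ≤ n → spot π c ≤ n)

/-- The bird's-eye permutation `ω_π`: the car parked at spot `i` (and `0` at `0`). -/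
noncomputable def birdsEye (n : ℕ) (π : ℕ → ℕ) (i : ℕ) : ℕ :=
  if i = 0 then 0 else sInf {c | 1 ≤ c ∧ c ≤ n ∧ spot π c = i}

/-- The inverse of the bird's-eye permutation. -/
noncomputable def birdsEyeInv (n : ℕ) (π : ℕ → ℕ) (c : ℕ) : ℕ :=
  sInf {i | birdsEye n π i = c}

/-- Parent function of the parking tree `PT(π)`: `f_π i = ω_π (π i - 1)`. -/
noncomputable def ptParent (n : ℕ) (π : ℕ → ℕ) (i : ℕ) : ℕ :=
  if 1 ≤ i ∧ i ≤ n then birdsEye n π (π i - 1) else 0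

/-- `v` is a record of the parking function `π`, i.e. a left-to-right maximum of
the word `ω_π(1) ω_π(2) ⋯ ω_π(n)`. -/
def IsPfRecord (n : ℕ) (π : ℕ → ℕ) (v : ℕ) : Prop :=
  ∃ i, 1 ≤ i ∧ i ≤ n ∧ birdsEye n π i = v ∧ ∀ j, 1 ≤ j → j < i → birdsEye n π j < v

/-- The waiting time of the tree: `wait T = Σ_{i=1}^n (i - f_{pt(T)}(i))`. -/
noncomputable def wait (n : ℕ) (f : ℕ → ℕ) : ℕ :=
  ∑ i ∈ Finset.Icc 1 n, (i - prioParent n f i)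

/-- The number of priority small ascents of the tree. -/
noncomputable def psa (n : ℕ) (f : ℕ → ℕ) : ℕ :=
  ((Finset.Icc 1 n).filter fun i => prioParent n f i = i - 1).card

/-- The number of children of the root. -/
def degRoot (n : ℕ) (f : ℕ → ℕ) : ℕ := numChildren n f 0

/-- The children sequence: `chseq n f j` is the number of vertices with exactly
`j` children. -/
def chseq (n : ℕ) (f : ℕ → ℕ) (j : ℕ) : ℕ :=
  ((Finset.Icc 0 n).filter fun v => numChildren n f v = j).card

/-- The number of probes of the parking function: `n` plus the total displacement. -/
noncomputable def probes (n : ℕ) (π : ℕ → ℕ) : ℕ :=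
  n + ∑ c ∈ Finset.Icc 1 n, (spot π c - π c)

/-- The number of lucky cars of `π`: cars parking at their preferred spot. -/
noncomputable def lucky (n : ℕ) (π : ℕ → ℕ) : ℕ :=
  ((Finset.Icc 1 n).filter fun c => spot π c = π c).card

/-- The number of `1`s in `π`. -/
def ones (n : ℕ) (π : ℕ → ℕ) : ℕ :=
  ((Finset.Icc 1 n).filter fun c => π c = 1).card

/-- The multiplicity of the value `v` in the parking function `π`. -/
def multIn (n : ℕ) (π : ℕ → ℕ) (v : ℕ) : ℕ :=
  ((Finset.Icc 1 n).filter fun c => π c = v).card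

/-- The multiplicity sequence: `multSeq n π j` is the number of values in
`{1,…,n+1}` appearing exactly `j` times in `π`. -/
def multSeq (n : ℕ) (π : ℕ → ℕ) (j : ℕ) : ℕ :=
  ((Finset.Icc 1 (n + 1)).filter fun v => multIn n π v = j).card

/-- The tree is a path graph with endpoints `0` and `n`: every vertex has at most
one child and `n` is the (unique) leaf. -/
def IsPathTree (n : ℕ) (f : ℕ → ℕ) : Prop :=
  (∀ v, v ≤ n → numChildren n f v ≤ 1) ∧ numChildren n f n = 0

/-- `g` is the parent map of a rooted forest on `{1,…,n}` rooted at `{1,…,k}`: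
the vertices `1,…,k` are roots (fixed points), every other vertex of `{1,…,n}` has a
parent in `{1,…,n}`, every vertex reaches one of the roots under iteration, and `g`
is pinned to `0` outside `{1,…,n}`. -/
def IsForestRootedAt (n k : ℕ) (g : ℕ → ℕ) : Prop :=
  (∀ i, 1 ≤ i → i ≤ k → g i = i) ∧
  (∀ i, k < i → i ≤ n → 1 ≤ g i ∧ g i ≤ n) ∧
  (∀ i, 1 ≤ i → i ≤ n → ∃ m, 1 ≤ g^[m] i ∧ g^[m] i ≤ k) ∧
  (∀ i, i = 0 ∨ n < i → g i = 0)

theorem iterate_zero {n : ℕ} {f : ℕ → ℕ} (hf : IsCayleyTree n f) (k : ℕ) : f^[k] 0 = 0 :=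
  Function.iterate_fixed hf.1 k

theorem iterate_le {n : ℕ} {f : ℕ → ℕ} (hf : IsCayleyTree n f) {i : ℕ} (hi : i ≤ n) (k : ℕ) :
    f^[k] i ≤ n := by
  induction k with
  | zero => simpa using hi
  | succ k ih =>
    rw [Function.iterate_succ_apply']
    rcases Nat.eq_zero_or_pos (f^[k] i) with h | h
    · rw [h, hf.1]; omega
    · exact hf.2.2.1 _ h ih

theorem isRecord_top {n : ℕ} (hn : 1 ≤ n) {f : ℕ → ℕ} (hf : IsCayleyTree n f) :
    IsRecord n f n := by
  refine ⟨hn, le_rfl, fun k hk => lt_of_le_of_ne (iterate_le hf le_rfl k) fun h => ?_⟩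
  obtain ⟨m, hm⟩ := hf.2.2.2 n hn le_rfl
  -- A cycle of length `k` through `n` returns to `n` after `k * m ≥ m` steps, where it must be `0`.
  have h1 : f^[k * m] n = n := by
    rw [Function.iterate_mul]
    exact Function.iterate_fixed h m
  have h2 : f^[k * m] n = 0 := by
    obtain ⟨d, hd⟩ := Nat.exists_eq_add_of_le' (Nat.le_mul_of_pos_left m hk)
    rw [hd, Function.iterate_add_apply, hm, iterate_zero hf]
  omega

theorem isRecord_of_parent_zero {n : ℕ} {f : ℕ → ℕ} (hf : IsCayleyTree n f) {w : ℕ}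
    (h1 : 1 ≤ w) (h2 : w ≤ n) (h : f w = 0) : IsRecord n f w := by
  refine ⟨h1, h2, fun k hk => ?_⟩
  obtain ⟨d, rfl⟩ := Nat.exists_eq_add_of_le' hk
  rw [Function.iterate_add_apply, Function.iterate_one, h, iterate_zero hf]
  exact h1

theorem parent_least_record {n : ℕ} {f : ℕ → ℕ} (hf : IsCayleyTree n f) {r : ℕ}
    (hr : IsRecord n f r) (hmin : ∀ j, IsRecord n f j → r ≤ j) : f r = 0 := by
  have hex := hf.2.2.2 r hr.1 hr.2.1
  have hspec := Nat.find_spec hex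
  have hlt := fun m => @Nat.find_min _ _ hex m
  generalize Nat.find hex = m at hspec hlt
  obtain _ | _ | m := m
  · have := hr.1
    simp at hspec
    omega
  · simpa using hspec
  · -- The last ancestor of `r` before the root would be a record smaller than `r`.
    have hw : f^[m + 1] r ≠ 0 := hlt (m + 1) (by omega)
    have hrec := isRecord_of_parent_zero hf (Nat.one_le_iff_ne_zero.mpr hw)
      (iterate_le hf hr.2.1 (m + 1)) (by rw [← Function.iterate_succ_apply' f]; exact hspec)
    have := hmin _ hrec
    have := hr.2.2 (m + 1) (by omega)
    omega

/-- The position shift underlying the record code: a record moves to the next record, every other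
vertex stays. -/
noncomputable def shift (n : ℕ) (f : ℕ → ℕ) (j : ℕ) : ℕ :=
  if IsRecord n f j then nextRecord n f j else j

theorem blob_eq (n : ℕ) (f : ℕ → ℕ) (j : ℕ) : blob n f j = f (shift n f j) := by
  unfold blob shift
  split_ifs <;> rfl

theorem nextRecord_spec {n : ℕ} (hn : 1 ≤ n) {f : ℕ → ℕ} (hf : IsCayleyTree n f) {j : ℕ}
    (hj : j < n) : IsRecord n f (nextRecord n f j) ∧ j < nextRecord n f j :=
  Nat.sInf_mem (s := {i | IsRecord n f i ∧ j < i}) ⟨n, isRecord_top hn hf, hj⟩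

theorem nextRecord_le {n : ℕ} {f : ℕ → ℕ} {j i : ℕ} (hi : IsRecord n f i) (hji : j < i) :
    nextRecord n f j ≤ i :=
  Nat.sInf_le (s := {i | IsRecord n f i ∧ j < i}) ⟨hi, hji⟩

theorem shift_injOn {n : ℕ} (hn : 1 ≤ n) {f : ℕ → ℕ} (hf : IsCayleyTree n f) :
    Set.InjOn (shift n f) (Finset.Icc 1 (n - 1) : Finset ℕ) := by
  intro a ha b hb hab
  simp only [Finset.coe_Icc, Set.mem_Icc] at ha hb
  have hA := nextRecord_spec hn hf (j := a) (by omega)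
  have hB := nextRecord_spec hn hf (j := b) (by omega)
  unfold shift at hab
  split_ifs at hab with h1 h2 h2
  · rcases lt_trichotomy a b with h | h | h
    · have := nextRecord_le h2 h
      omega
    · exact h
    · have := nextRecord_le h1 h
      omega
  · exact absurd (hab ▸ hA.1) h2
  · exact absurd (hab ▸ hB.1) h1
  · exact hab

theorem image_shift {n : ℕ} (hn : 1 ≤ n) {f : ℕ → ℕ} (hf : IsCayleyTree n f) {r : ℕ}
    (hr : IsRecord n f r) (hmin : ∀ j, IsRecord n f j → r ≤ j) :
    (Finset.Icc 1 (n - 1)).image (shift n f) = (Finset.Icc 1 n).erase r := by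
  apply Finset.eq_of_subset_of_card_le
  · intro x hx
    obtain ⟨j, hj, rfl⟩ := Finset.mem_image.mp hx
    rw [Finset.mem_Icc] at hj
    have hJ := nextRecord_spec hn hf (j := j) (by omega)
    rw [Finset.mem_erase, Finset.mem_Icc]
    unfold shift
    split_ifs with h
    · have := hmin j h
      exact ⟨by omega, hJ.1.1, hJ.1.2.1⟩
    · exact ⟨fun e => h (e ▸ hr), hj.1, by omega⟩
  · rw [Finset.card_image_of_injOn (shift_injOn hn hf),
      Finset.card_erase_of_mem (Finset.mem_Icc.mpr ⟨hr.1, hr.2.1⟩)]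
    simp

theorem card_blob_eq {n : ℕ} (hn : 1 ≤ n) {f : ℕ → ℕ} (hf : IsCayleyTree n f) {r : ℕ}
    (hr : IsRecord n f r) (hmin : ∀ j, IsRecord n f j → r ≤ j) (v : ℕ) :
    ((Finset.Icc 1 (n - 1)).filter fun j => blob n f j = v).card =
      (((Finset.Icc 1 n).filter fun i => f i = v).erase r).card := by
  rw [← Finset.filter_erase, ← image_shift hn hf hr hmin, Finset.filter_image,
    Finset.card_image_of_injOn]
  · simp only [blob_eq]
  · exact (shift_injOn hn hf).mono (Finset.coe_subset.mpr (Finset.filter_subset _ _))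

/-- In the record code of a Cayley tree, each non-root vertex `i`
appears as many times as it has children, and the root `0` appears (number of
children of the root) minus one times. -/
theorem stmt0 (n : ℕ) (hn : 1 ≤ n) (f : ℕ → ℕ) (hf : IsCayleyTree n f) :
    (∀ i, 1 ≤ i → i ≤ n →
        numChildren n f i =
          ((Finset.Icc 1 (n - 1)).filter fun j => blob n f j = i).card) ∧
    numChildren n f 0 =
      ((Finset.Icc 1 (n - 1)).filter fun j => blob n f j = 0).card + 1 := by
  obtain ⟨r, hr, hmin⟩ : ∃ r, IsRecord n f r ∧ ∀ j, IsRecord n f j → r ≤ j := by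
    have hex : ∃ r, IsRecord n f r := ⟨n, isRecord_top hn hf⟩
    exact ⟨Nat.find hex, Nat.find_spec hex, fun j hj => Nat.find_min' hex hj⟩
  have h0 := parent_least_record hf hr hmin
  refine ⟨fun i hi _ => ?_, ?_⟩
  · rw [card_blob_eq hn hf hr hmin, Finset.erase_eq_of_notMem, numChildren]
    · rw [Finset.mem_filter]
      omega
  · rw [card_blob_eq hn hf hr hmin, Finset.card_erase_add_one, numChildren]
    · exact Finset.mem_filter.mpr ⟨Finset.mem_Icc.mpr ⟨hr.1, hr.2.1⟩, h0⟩

end WearyParking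
end

section
/- Let n ≥ 1 and 1 ≤ k ≤ n. The number f(n,k) of rooted forests with vertex set {1,…,n} that have exactly k connected components in which the vertices 1, 2, …, k lie in pairwise distinct components (each being the root of its component) satisfies n^k · f(n,k) = k · n^{n−1}; in particular, for k ≤ n−1, f(n,k) = k·n^{n−k−1}. -/
/-!
The count goes by peeling off the children of the roots. Let `F(r, s)` be the number of forests
with `r` prescribed roots and `s` further vertices. If `T` is the set of non-roots whose parent
is a root, then the forest consists of an arbitrary map from `T` to the roots together with a
forest on the non-roots with root set `T` (`card_forests_fiber`), whence
`F(r, s) = ∑ₜ (s choose t) r ^ t F(t, s - t)`. By strong induction on `s`,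
`s * F(t, s - t) = t * s ^ (s - t)`, so for `s ≥ 1`
`s * F(r, s) = ∑ₜ (s choose t) t r ^ t s ^ (s - t) = s * r * (r + s) ^ (s - 1)`
by the differentiated binomial theorem (`sum_choose_mul_index`); this is `card_forests`.

Acyclicity is expressed by the absence of nonempty invariant sets of non-roots, which makes the
peeling step immediate. `isForestRootedAt_extendZero` identifies this with the condition that
every vertex reaches a root.
-/

open scoped Classical

namespace WearyParking

/-! ### Counting forests by peeling off the children of the roots -/

section LayeredForests

variable {α : Type*} [Fintype α]

/-- Parent maps of the forests with vertex set `R ∪ S` and root set `R`, extended by the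
identity outside `S`. Acyclicity is encoded by the absence of a nonempty `g`-invariant
subset of `S`, a condition that survives the removal of `R`. -/
noncomputable def forests (R S : Finset α) : Finset (α → α) :=
  Finset.univ.filter fun g =>
    (∀ i ∈ S, g i ∈ R ∨ g i ∈ S) ∧ (∀ i, i ∉ S → g i = i) ∧
      ∀ U ⊆ S, (∀ i ∈ U, g i ∈ U) → U = ∅

/-- Maps sending `T` to `R` and fixing all points outside `T`. -/
noncomputable def layerMaps (R T : Finset α) : Finset (α → α) :=
  Fintype.piFinset fun i => if i ∈ T then R else {i}

lemma mem_layerMaps {R T : Finset α} {h : α → α} :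
    h ∈ layerMaps R T ↔ (∀ i ∈ T, h i ∈ R) ∧ ∀ i, i ∉ T → h i = i := by
  simp only [layerMaps, Fintype.mem_piFinset]
  constructor
  · intro H
    exact ⟨fun i hi => by simpa [hi] using H i, fun i hi => by simpa [hi] using H i⟩
  · rintro ⟨h1, h2⟩ i
    by_cases hi : i ∈ T
    · simpa [hi] using h1 i hi
    · simpa [hi] using h2 i hi

lemma card_layerMaps (R T : Finset α) : (layerMaps R T).card = R.card ^ T.card := by
  rw [layerMaps, Fintype.card_piFinset]
  simp only [apply_ite Finset.card, Finset.card_singleton]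
  rw [Finset.prod_ite]
  simp

lemma forests_empty_right (R : Finset α) : (forests R ∅).card = 1 := by
  rw [Finset.card_eq_one]
  refine ⟨id, ?_⟩
  ext g
  simp only [forests, Finset.mem_filter, Finset.mem_univ, true_and, Finset.mem_singleton]
  constructor
  · rintro ⟨-, h, -⟩
    funext i
    exact h i (by simp)
  · rintro rfl
    simp

lemma forests_empty_left {S : Finset α} (hS : S.Nonempty) : (forests ∅ S).card = 0 := by
  rw [Finset.card_eq_zero, Finset.eq_empty_iff_forall_notMem]
  intro g hg
  simp only [forests, Finset.mem_filter, Finset.mem_univ, true_and, Finset.notMem_empty,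
    false_or] at hg
  exact hS.ne_empty (hg.2.2 S subset_rfl hg.1)

/-- A forest whose set of children of roots is `T` amounts to an arbitrary map `T → R` and a
forest on `S` with root set `T`: invariant subsets of `S` avoid `T`, since `T` is sent
into `R`. -/
lemma card_forests_fiber {R S T : Finset α} (hRS : Disjoint R S) (hT : T ⊆ S) :
    ((forests R S).filter fun g => S.filter (fun i => g i ∈ R) = T).card =
      R.card ^ T.card * (forests T (S \ T)).card := by
  rw [← card_layerMaps, ← Finset.card_product]
  have hd : ∀ x, x ∈ R → x ∉ S := fun x hx => Finset.disjoint_left.1 hRS hx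
  refine Finset.card_nbij' (fun g => (T.piecewise g id, (S \ T).piecewise g id))
    (fun p => T.piecewise p.1 p.2) ?_ ?_ ?_ ?_
  · intro g hg
    simp only [forests, Finset.coe_filter, Finset.mem_filter, Finset.mem_univ, true_and,
      Set.mem_ofPred_eq] at hg
    obtain ⟨⟨h1, h2, h3⟩, h4⟩ := hg
    have hmem : ∀ i, i ∈ T ↔ i ∈ S ∧ g i ∈ R := fun i => by rw [← h4]; simp
    simp only [Finset.coe_product, Set.mem_prod, Finset.mem_coe, mem_layerMaps]
    refine ⟨⟨fun i hi => ?_, fun i hi => ?_⟩, ?_⟩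
    · simpa [hi] using ((hmem i).1 hi).2
    · simp [hi]
    · simp only [forests, Finset.mem_filter, Finset.mem_univ, true_and]
      refine ⟨fun i hi => ?_, fun i hi => ?_, fun U hU hinv => ?_⟩
      · rw [Finset.piecewise_eq_of_mem _ _ _ hi]
        have := h1 i (Finset.mem_sdiff.1 hi).1
        have h5 := hmem i
        simp only [Finset.mem_sdiff] at *
        tauto
      · rw [Finset.piecewise_eq_of_notMem _ _ _ hi]; rfl
      · refine h3 U (hU.trans Finset.sdiff_subset) fun i hi => ?_
        have := hinv i hi
        rwa [Finset.piecewise_eq_of_mem _ _ _ (hU hi)] at this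
  · rintro ⟨h, g⟩ hp
    simp only [Finset.coe_product, Set.mem_prod, Finset.mem_coe, mem_layerMaps, forests,
      Finset.mem_filter, Finset.mem_univ, true_and] at hp
    obtain ⟨⟨ha, hb⟩, h1, h2, h3⟩ := hp
    have hin : ∀ i ∈ T, T.piecewise h g i = h i := fun i hi =>
      Finset.piecewise_eq_of_mem _ _ _ hi
    have hout : ∀ i, i ∉ T → T.piecewise h g i = g i := fun i hi =>
      Finset.piecewise_eq_of_notMem _ _ _ hi
    have hgS : ∀ i ∈ S, i ∉ T → g i ∈ S := fun i hi hiT => by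
      have := h1 i (Finset.mem_sdiff.2 ⟨hi, hiT⟩)
      rcases this with h | h
      · exact hT h
      · exact (Finset.mem_sdiff.1 h).1
    simp only [forests, Finset.coe_filter, Finset.mem_filter, Finset.mem_univ, true_and,
      Set.mem_ofPred_eq]
    refine ⟨⟨fun i hi => ?_, fun i hi => ?_, fun U hU hinv => ?_⟩, ?_⟩
    · by_cases hiT : i ∈ T
      · rw [hin i hiT]; exact Or.inl (ha i hiT)
      · rw [hout i hiT]; exact Or.inr (hgS i hi hiT)
    · rw [hout i fun hiT => hi (hT hiT)]
      exact h2 i fun hi' => hi (Finset.mem_sdiff.1 hi').1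
    · have hUT : ∀ i ∈ U, i ∉ T := fun i hi hiT => by
        have := hinv i hi
        rw [hin i hiT] at this
        exact hd _ (ha i hiT) (hU this)
      refine h3 U (fun i hi => Finset.mem_sdiff.2 ⟨hU hi, hUT i hi⟩) fun i hi => ?_
      rw [← hout i (hUT i hi)]
      exact hinv i hi
    · ext i
      simp only [Finset.mem_filter]
      by_cases hiT : i ∈ T
      · simp only [hin i hiT, hiT, ha i hiT, hT hiT, and_self]
      · simp only [hout i hiT, hiT, iff_false, not_and]
        exact fun hi hR => hd _ hR (hgS i hi hiT)
  · intro g hg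
    simp only [forests, Finset.coe_filter, Finset.mem_filter, Finset.mem_univ, true_and,
      Set.mem_ofPred_eq] at hg
    obtain ⟨⟨h1, h2, h3⟩, h4⟩ := hg
    funext i
    by_cases hiT : i ∈ T
    · simp [hiT]
    · by_cases hiS : i ∈ S
      · simp [hiT, hiS]
      · simp [hiT, hiS, h2 i hiS]
  · rintro ⟨h, g⟩ hp
    simp only [Finset.coe_product, Set.mem_prod, Finset.mem_coe, mem_layerMaps, forests,
      Finset.mem_filter, Finset.mem_univ, true_and] at hp
    obtain ⟨⟨ha, hb⟩, h1, h2, h3⟩ := hp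
    refine Prod.ext ?_ ?_ <;> funext i
    · by_cases hiT : i ∈ T
      · simp [hiT]
      · simp [hiT, hb i hiT]
    · by_cases hi : i ∈ S \ T
      · have := (Finset.mem_sdiff.1 hi).2
        simp only [Finset.piecewise_eq_of_mem _ _ _ hi, Finset.piecewise_eq_of_notMem _ _ _ this]
      · simp only [Finset.piecewise_eq_of_notMem _ _ _ hi, h2 i hi, id]

lemma card_forests_layers {R S : Finset α} (hRS : Disjoint R S) :
    (forests R S).card =
      ∑ T ∈ S.powerset, R.card ^ T.card * (forests T (S \ T)).card := by
  rw [Finset.card_eq_sum_card_fiberwise (f := fun g => S.filter (fun i => g i ∈ R))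
    (t := S.powerset) (fun g _ => by
      simpa only [Finset.mem_coe, Finset.mem_powerset] using Finset.filter_subset _ _)]
  exact Finset.sum_congr rfl fun T hT => card_forests_fiber hRS (Finset.mem_powerset.1 hT)

/-- The derivative with respect to `r` of the binomial expansion of `(r + a) ^ (s + 1)`,
multiplied by `r`. -/
lemma sum_choose_mul_index (r a s : ℕ) :
    ∑ m ∈ Finset.range (s + 2), (s + 1).choose m * (r ^ m * (m * a ^ (s + 1 - m))) =
      (s + 1) * (r * (r + a) ^ s) := by
  rw [Finset.sum_range_succ', add_pow, Finset.mul_sum, Finset.mul_sum]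
  simp only [zero_mul, mul_zero, add_zero]
  refine Finset.sum_congr rfl fun m _ => ?_
  have h := Nat.add_one_mul_choose_eq s m
  rw [Nat.add_sub_add_right]
  calc _ = ((s + 1).choose (m + 1) * (m + 1)) * (r ^ (m + 1) * a ^ (s - m)) := by ring
    _ = _ := by rw [← h]; push_cast; ring

/-- `F(r, s) = r * (r + s) ^ (s - 1)`, multiplied by `r + s` so that the exponent needs no
subtraction and `s = 0` is covered. -/
theorem card_forests (s : ℕ) : ∀ R S : Finset α, Disjoint R S → S.card = s →
    (R.card + s) * (forests R S).card = R.card * (R.card + s) ^ s := by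
  induction s using Nat.strong_induction_on with
  | _ s ih =>
  intro R S hRS hs
  rcases s with _ | s
  · rw [Finset.card_eq_zero] at hs
    subst hs
    simp [forests_empty_right]
  have key : ∀ T ∈ S.powerset, (s + 1) * (R.card ^ T.card * (forests T (S \ T)).card) =
      R.card ^ T.card * (T.card * (s + 1) ^ (s + 1 - T.card)) := by
    intro T hT
    rw [Finset.mem_powerset] at hT
    rcases T.eq_empty_or_nonempty with rfl | hne
    · have : S.Nonempty := Finset.card_pos.1 (by omega)
      simp [forests_empty_left this]
    · have hpos := hne.card_pos
      have hle := Finset.card_le_card hT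
      have := ih (s + 1 - T.card) (by omega) T (S \ T) Finset.disjoint_sdiff
        (by rw [Finset.card_sdiff_of_subset hT, hs])
      rw [show T.card + (s + 1 - T.card) = s + 1 by omega] at this
      rw [← this]; ring
  have hF : (forests R S).card = R.card * (R.card + (s + 1)) ^ s := by
    have hmul : (s + 1) * (forests R S).card = (s + 1) * (R.card * (R.card + (s + 1)) ^ s) := by
      rw [card_forests_layers hRS, Finset.mul_sum, Finset.sum_congr rfl key,
        Finset.sum_powerset_apply_card
          (fun m => R.card ^ m * (m * (s + 1) ^ (s + 1 - m))), hs]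
      simpa using sum_choose_mul_index R.card (s + 1) s
    exact Nat.eq_of_mul_eq_mul_left (Nat.succ_pos s) hmul
  rw [hF]; ring

end LayeredForests

/-! ### Transfer to parent maps on `ℕ` -/

/-- Extension by `0` of a self-map of `{0, …, n}` to a self-map of `ℕ`. -/
noncomputable def extendZero (n : ℕ) (G : Fin (n + 1) → Fin (n + 1)) (i : ℕ) : ℕ :=
  if h : i < n + 1 then G ⟨i, h⟩ else 0

lemma extendZero_apply {n : ℕ} (G : Fin (n + 1) → Fin (n + 1)) (i : Fin (n + 1)) :
    extendZero n G i = G i := by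
  simp only [extendZero, dif_pos i.isLt]

lemma extendZero_iterate {n : ℕ} (G : Fin (n + 1) → Fin (n + 1)) (m : ℕ) (i : Fin (n + 1)) :
    (extendZero n G)^[m] i = (G^[m] i : Fin (n + 1)) := by
  induction m generalizing i with
  | zero => rfl
  | succ m ih => rw [Function.iterate_succ_apply, Function.iterate_succ_apply,
      extendZero_apply, ih]

lemma extendZero_injective (n : ℕ) : Function.Injective (extendZero n) := by
  intro G H h
  funext i
  have := congrFun h i
  rw [extendZero_apply, extendZero_apply] at this
  exact Fin.ext this

/-- The roots `1, …, k`. -/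
def rootSet (n k : ℕ) : Finset (Fin (n + 1)) :=
  Finset.univ.filter fun i => 1 ≤ i.val ∧ i.val ≤ k

/-- The non-root vertices `k + 1, …, n`. -/
def nonRootSet (n k : ℕ) : Finset (Fin (n + 1)) :=
  Finset.univ.filter fun i => k < i.val

lemma card_rootSet {n k : ℕ} (hkn : k ≤ n) : (rootSet n k).card = k := by
  have : (rootSet n k).map Fin.valEmbedding = Finset.Icc 1 k := by
    ext x
    simp only [rootSet, Finset.mem_map, Finset.mem_filter, Finset.mem_univ, true_and,
      Fin.valEmbedding_apply, Finset.mem_Icc]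
    constructor
    · rintro ⟨i, hi, rfl⟩; exact hi
    · intro hx; exact ⟨⟨x, by omega⟩, hx, rfl⟩
  rw [← Finset.card_map Fin.valEmbedding, this]; simp

lemma card_nonRootSet (n k : ℕ) : (nonRootSet n k).card = n - k := by
  have : (nonRootSet n k).map Fin.valEmbedding = Finset.Ioc k n := by
    ext x
    simp only [nonRootSet, Finset.mem_map, Finset.mem_filter, Finset.mem_univ, true_and,
      Fin.valEmbedding_apply, Finset.mem_Ioc]
    constructor
    · rintro ⟨i, hi, rfl⟩; exact ⟨hi, by omega⟩
    · intro hx; exact ⟨⟨x, by omega⟩, hx.1, rfl⟩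
  rw [← Finset.card_map Fin.valEmbedding, this]; simp

/-- Reaching a root from every vertex is equivalent to the absence of an invariant set of
non-roots: the vertices that never reach a root form such a set. -/
lemma isForestRootedAt_extendZero {n k : ℕ} (hkn : k ≤ n) (G : Fin (n + 1) → Fin (n + 1)) :
    IsForestRootedAt n k (extendZero n G) ↔ G ∈ forests (rootSet n k) (nonRootSet n k) := by
  simp only [forests, Finset.mem_filter, Finset.mem_univ, true_and]
  have hS : ∀ i, i ∈ nonRootSet n k ↔ k < i.val := by simp [nonRootSet]
  have hR : ∀ i, i ∈ rootSet n k ↔ 1 ≤ i.val ∧ i.val ≤ k := by simp [rootSet]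
  constructor
  · rintro ⟨h1, h2, h3, h4⟩
    refine ⟨fun i hi => ?_, fun i hi => ?_, fun U hU hinv => ?_⟩
    · have := h2 i ((hS i).1 hi) (by omega)
      rw [extendZero_apply] at this
      rw [hS, hR]; omega
    · rw [hS] at hi
      apply Fin.ext
      rw [← extendZero_apply]
      by_cases h0 : i.val = 0
      · rw [h4 i (Or.inl h0), h0]
      · exact h1 i (by omega) (by omega)
    · rw [Finset.eq_empty_iff_forall_notMem]
      intro i hi
      have hiS := (hS i).1 (hU hi)
      obtain ⟨m, -, hm⟩ := h3 i (by omega) (by omega)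
      rw [extendZero_iterate] at hm
      have : ∀ m, G^[m] i ∈ U := fun m => by
        induction m with
        | zero => exact hi
        | succ m ih => rw [Function.iterate_succ_apply']; exact hinv _ ih
      have := (hS _).1 (hU (this m))
      omega
  · rintro ⟨h1, h2, h3⟩
    have hU := h3 ((nonRootSet n k).filter fun i => ∀ m, G^[m] i ∉ rootSet n k)
      (Finset.filter_subset _ _) (by
        intro i hi
        rw [Finset.mem_filter] at hi ⊢
        refine ⟨?_, fun m => by simpa using hi.2 (m + 1)⟩
        exact (h1 i hi.1).resolve_left (hi.2 1))
    refine ⟨fun i hi hik => ?_, fun i hi hin => ?_, fun i hi hin => ?_, fun i hi => ?_⟩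
    · have := extendZero_apply G ⟨i, by omega⟩
      rw [h2 _ (by rw [hS]; simpa using hik)] at this
      exact this
    · have := h1 ⟨i, by omega⟩ (by rw [hS]; exact hi)
      rw [hS, hR, ← extendZero_apply] at this
      simp only at this
      refine ⟨by omega, ?_⟩
      have h := extendZero_apply G ⟨i, by omega⟩
      simp only at h
      omega
    · by_cases hik : i ≤ k
      · exact ⟨0, hi, hik⟩
      · have hx : (⟨i, by omega⟩ : Fin (n + 1)) ∈ nonRootSet n k := by
          rw [hS]; simpa using hik
        by_contra hcon
        push Not at hcon
        refine Finset.eq_empty_iff_forall_notMem.1 hU ⟨i, by omega⟩ ?_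
        rw [Finset.mem_filter]
        refine ⟨hx, fun m hm => ?_⟩
        rw [hR, ← extendZero_iterate] at hm
        exact absurd hm.2 (not_le.2 (hcon m hm.1))
    · rcases hi with rfl | hi
      · have := extendZero_apply G 0
        rw [h2 0 (by rw [hS]; simp)] at this
        exact this
      · simp only [extendZero]
        rw [dif_neg (by omega)]

lemma ncard_forests {n k : ℕ} (hkn : k ≤ n) :
    Set.ncard {g : ℕ → ℕ | IsForestRootedAt n k g} =
      (forests (rootSet n k) (nonRootSet n k)).card := by
  rw [← Set.ncard_coe_finset, ← Set.ncard_image_of_injective _ (extendZero_injective n)]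
  congr 1
  ext g
  simp only [Set.mem_ofPred_eq, Set.mem_image, Finset.mem_coe]
  constructor
  · intro hg
    have hlt : ∀ i, g i < n + 1 := fun i => by
      obtain ⟨h1, h2, -, h4⟩ := hg
      by_cases hi : i = 0 ∨ n < i
      · rw [h4 i hi]; omega
      · by_cases hik : i ≤ k
        · rw [h1 i (by omega) hik]; omega
        · have := h2 i (by omega) (by omega); omega
    have hext : extendZero n (fun i => ⟨g i, hlt i⟩) = g := by
      funext i
      by_cases hi : i < n + 1
      · simp [extendZero, hi]
      · simp [extendZero, hi, hg.2.2.2 i (Or.inr (by omega))]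
    exact ⟨_, (isForestRootedAt_extendZero hkn _).1 (hext.symm ▸ hg), hext⟩
  · rintro ⟨G, hG, rfl⟩
    exact (isForestRootedAt_extendZero hkn G).2 hG

/-- (Cayley) The number `f(n,k)` of rooted forests on `{1,…,n}`
rooted at `{1,…,k}` satisfies `n^k · f(n,k) = k · n^{n-1}`; in particular, for
`k ≤ n-1`, `f(n,k) = k·n^{n-k-1}`. -/
theorem stmt5 (n k : ℕ) (hn : 1 ≤ n) (hk1 : 1 ≤ k) (hkn : k ≤ n) :
    n ^ k * Set.ncard {g : ℕ → ℕ | IsForestRootedAt n k g} = k * n ^ (n - 1) ∧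
    (k ≤ n - 1 →
      Set.ncard {g : ℕ → ℕ | IsForestRootedAt n k g} = k * n ^ (n - k - 1)) := by
  have hF := card_forests (n - k) (rootSet n k) (nonRootSet n k)
    (by
      rw [Finset.disjoint_left]
      intro i hi hi'
      simp only [rootSet, nonRootSet, Finset.mem_filter, Finset.mem_univ, true_and] at hi hi'
      omega)
    (card_nonRootSet n k)
  rw [card_rootSet hkn, ← ncard_forests hkn, Nat.add_sub_cancel' hkn] at hF
  refine ⟨?_, fun hk => ?_⟩
  · calc _ = n ^ (k - 1) * (n * Set.ncard {g : ℕ → ℕ | IsForestRootedAt n k g}) := by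
          rw [← mul_assoc, ← pow_succ, Nat.sub_add_cancel hk1]
      _ = k * (n ^ (k - 1) * n ^ (n - k)) := by rw [hF]; ring
      _ = _ := by rw [← pow_add]; congr 2; omega
  · apply Nat.eq_of_mul_eq_mul_left hn
    rw [hF, show n - k = (n - k - 1) + 1 by omega, pow_succ]
    simp only [Nat.add_sub_cancel]
    ring

end WearyParking
end

section
/- Let π be a parking function of length n with bird's-eye permutation ω_π, and let PT(π) be its parking tree with parent function f_π. Then every non-root ancestor of a vertex v ∈ {1,…,n} in PT(π) lies strictly to the left of v in the word ω_π(1) ω_π(2) ⋯ ω_π(n): for every j ≥ 1 with f_π^j(v) ≠ 0, one has ω_π^{-1}(f_π^j(v)) < ω_π^{-1}(v). -/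
/-!
Since `ω_π⁻¹(v)` is the spot where car `v` parks (`birdsEyeInv_eq_spot`, which rests on
distinct cars occupying distinct spots), the claim compares parking spots. A non-root
parent of `v` is the car parked at spot `π(v) - 1`, while `v` itself parks at a spot
`≥ π(v)`. So passing to a non-root parent strictly decreases the spot (`spot_ptParent_lt`),
and the statement about all ancestors follows by iteration.
-/

open scoped Classical

namespace WearyParking

theorem length_spotList (π : ℕ → ℕ) (c : ℕ) : (spotList π c).length = c := by
  induction c with
  | zero => rfl
  | succ c ih => simp [spotList, ih]

theorem spot_succ (π : ℕ → ℕ) (c : ℕ) :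
    spot π (c + 1) = sInf {s | π (c + 1) ≤ s ∧ s ∉ spotList π c} := by
  simp [spot, spotList, length_spotList]

theorem spotList_succ (π : ℕ → ℕ) (c : ℕ) :
    spotList π (c + 1) = spotList π c ++ [spot π (c + 1)] := by
  rw [spot_succ, spotList]

/-- A car parks at or after its preferred spot, and not on a spot taken before. The
infimum defining `spot` is attained because only finitely many spots are occupied. -/
theorem spot_succ_mem (π : ℕ → ℕ) (c : ℕ) :
    π (c + 1) ≤ spot π (c + 1) ∧ spot π (c + 1) ∉ spotList π c := by
  rw [spot_succ]
  refine Nat.sInf_mem (s := {s | π (c + 1) ≤ s ∧ s ∉ spotList π c}) ?_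
  obtain ⟨s, hs, hs'⟩ :=
    (Set.Ici_infinite (π (c + 1))).exists_notMem_finset (spotList π c).toFinset
  exact ⟨s, hs, by simpa using hs'⟩

theorem spot_mem_spotList (π : ℕ → ℕ) {c d : ℕ} (hc : 1 ≤ c) (hcd : c ≤ d) :
    spot π c ∈ spotList π d := by
  induction d, hcd using Nat.le_induction with
  | base =>
    obtain ⟨k, rfl⟩ := Nat.exists_eq_add_of_le' hc
    simp [spotList_succ]
  | succ d _ ih => simp [spotList_succ, ih]

theorem pref_le_spot (π : ℕ → ℕ) {c : ℕ} (hc : 1 ≤ c) : π c ≤ spot π c := by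
  obtain ⟨k, rfl⟩ := Nat.exists_eq_add_of_le' hc
  exact (spot_succ_mem π k).1

theorem spot_ne_of_lt (π : ℕ → ℕ) {c d : ℕ} (hc : 1 ≤ c) (hcd : c < d) :
    spot π c ≠ spot π d := by
  obtain ⟨k, rfl⟩ := Nat.exists_eq_add_of_le' (hc.trans hcd.le)
  intro h
  exact (spot_succ_mem π k).2 (h ▸ spot_mem_spotList π hc (Nat.lt_succ_iff.mp hcd))

/-- A nonzero value of `birdsEye` at `i` is a genuine car, parked at `i`; the value `0`
is what the infimum returns at an empty spot. -/
theorem spot_birdsEye {n : ℕ} {π : ℕ → ℕ} {i : ℕ} (h : birdsEye n π i ≠ 0) :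
    1 ≤ birdsEye n π i ∧ birdsEye n π i ≤ n ∧ spot π (birdsEye n π i) = i := by
  unfold birdsEye at h ⊢
  split_ifs at h ⊢ with hi
  · exact absurd rfl h
  · exact Nat.sInf_mem (Nat.nonempty_of_sInf_eq_succ (Nat.succ_pred_eq_of_ne_zero h).symm)

theorem birdsEye_spot {n : ℕ} {π : ℕ → ℕ} (hπ : IsParkingFun n π) {v : ℕ} (h1 : 1 ≤ v)
    (hn : v ≤ n) : birdsEye n π (spot π v) = v := by
  have hpos : spot π v ≠ 0 := by
    have := (hπ.1 v h1 hn).1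
    have := pref_le_spot π h1
    omega
  rw [birdsEye, if_neg hpos]
  obtain ⟨h1', -, hs⟩ := Nat.sInf_mem (s := {c | 1 ≤ c ∧ c ≤ n ∧ spot π c = spot π v})
    ⟨v, h1, hn, rfl⟩
  refine le_antisymm (Nat.sInf_le ⟨h1, hn, rfl⟩) (not_lt.mp fun hlt => ?_)
  exact spot_ne_of_lt π h1' hlt hs

theorem birdsEyeInv_eq_spot {n : ℕ} {π : ℕ → ℕ} (hπ : IsParkingFun n π) {v : ℕ}
    (h1 : 1 ≤ v) (hn : v ≤ n) : birdsEyeInv n π v = spot π v := by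
  have hmem : birdsEye n π (birdsEyeInv n π v) = v :=
    Nat.sInf_mem (s := {i | birdsEye n π i = v}) ⟨_, birdsEye_spot hπ h1 hn⟩
  have h := (spot_birdsEye (n := n) (π := π) (i := birdsEyeInv n π v) (by omega)).2.2
  rw [hmem] at h
  exact h.symm

/-- A non-root parent of `v` is the car parked immediately before the spot preferred
by `v`, hence strictly before `v`. -/
theorem spot_ptParent_lt {n : ℕ} {π : ℕ → ℕ} (hπ : IsParkingFun n π) {v : ℕ}
    (h1 : 1 ≤ v) (hn : v ≤ n) (h : ptParent n π v ≠ 0) :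
    1 ≤ ptParent n π v ∧ ptParent n π v ≤ n ∧ spot π (ptParent n π v) < spot π v := by
  rw [ptParent, if_pos ⟨h1, hn⟩] at h ⊢
  obtain ⟨h1', hn', hs⟩ := spot_birdsEye h
  have := (hπ.1 v h1 hn).1
  have := pref_le_spot π h1
  exact ⟨h1', hn', by omega⟩

theorem spot_iterate_ptParent_lt {n : ℕ} {π : ℕ → ℕ} (hπ : IsParkingFun n π) {v : ℕ}
    (h1 : 1 ≤ v) (hn : v ≤ n) (j : ℕ) (h : (ptParent n π)^[j + 1] v ≠ 0) :
    1 ≤ (ptParent n π)^[j + 1] v ∧ (ptParent n π)^[j + 1] v ≤ n ∧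
      spot π ((ptParent n π)^[j + 1] v) < spot π v := by
  induction j with
  | zero => exact spot_ptParent_lt hπ h1 hn h
  | succ j ih =>
    rw [Function.iterate_succ_apply'] at h ⊢
    -- `ptParent` fixes the root, so a vertex with a non-root parent is itself non-root.
    have h0 : (ptParent n π)^[j + 1] v ≠ 0 := fun h0 => h (by simp [h0, ptParent])
    obtain ⟨h1', hn', hlt⟩ := ih h0
    obtain ⟨h1'', hn'', hlt'⟩ := spot_ptParent_lt hπ h1' hn' h
    exact ⟨h1'', hn'', hlt'.trans hlt⟩

/-- Every non-root ancestor of a vertex `v` in the parking tree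
`PT(π)` lies strictly to the left of `v` in the word `ω_π(1) ⋯ ω_π(n)`. -/
theorem stmt10 (n : ℕ) (π : ℕ → ℕ) (hπ : IsParkingFun n π) :
    ∀ v, 1 ≤ v → v ≤ n → ∀ j, 1 ≤ j → (ptParent n π)^[j] v ≠ 0 →
      birdsEyeInv n π ((ptParent n π)^[j] v) < birdsEyeInv n π v := by
  intro v h1 hn j hj h
  obtain ⟨k, rfl⟩ := Nat.exists_eq_add_of_le' hj
  obtain ⟨h1', hn', hlt⟩ := spot_iterate_ptParent_lt hπ h1 hn k h
  rwa [birdsEyeInv_eq_spot hπ h1' hn', birdsEyeInv_eq_spot hπ h1 hn]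

end WearyParking
end
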